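/- Let K be a nonempty finite index set, a : K → ℝ with a_k > 0 for every k, r > 0, and let f : K → B be a function into a finite index set B whose fibers f⁻¹(j) are all nonempty. The pushforward of the product measure ⊗_{k ∈ K} Gamma(a_k, r) on (K → ℝ) under the map g ↦ (j ↦ Σ_{k : f(k) = j} g(k)) equals the product measure ⊗_{j ∈ B} Gamma(Σ_{k : f(k) = j} a_k, r). (Aggregation of independent gamma masses over a partition of components, the finite-dimensional form of the decomposability of the gamma process.) -/

import Mathlib

/-!
The proof is by characteristic functions. Tilting the density of `Gamma(a, r)` by `exp (t x)` with
`t < r` gives a multiple of the density of `Gamma(a, r - t)`, so the moment generating function is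
`(1 - t / r) ^ (-a)` there (`mgf_gammaMeasure`). The complex moment generating
function is analytic on the half-plane `Re z < r`, so the identity theorem extends this formula to
the imaginary axis: the characteristic function is `(1 - i t / r) ^ (-a)` (`charFun_gammaMeasure`).

The characteristic function of the aggregated vector at `t : B → ℝ` is, by Fubini,
`∏ k, (1 - i t (f k) / r) ^ (-a k)`. Grouping the factors by the fibers of `f` and adding exponents
of equal bases gives `∏ j, (1 - i t j / r) ^ (-∑ k ∈ f ⁻¹ j, a k)`, the characteristic function of
the target product measure, and characteristic functions determine finite measures.
-/

open MeasureTheory ProbabilityTheory Classical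

open scoped Classical

/-- Exponential tilting of a gamma density changes its rate from `r` to `r - t`. -/
lemma gammaPDFReal_mul_exp {a r t : ℝ} (hr : 0 < r) (ht : t < r) (x : ℝ) :
    gammaPDFReal a r x * Real.exp (t * x) =
      (1 - t / r) ^ (-a) * gammaPDFReal a (r - t) x := by
  have hrt : 0 < r - t := sub_pos.2 ht
  unfold gammaPDFReal
  split_ifs
  · have h1 : (1 - t / r) ^ (-a) * (r - t) ^ a = r ^ a := by
      rw [show 1 - t / r = (r - t) / r by field_simp, Real.rpow_neg (by positivity),
        Real.div_rpow hrt.le hr.le]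
      have := Real.rpow_pos_of_pos hrt a
      field_simp
    have h2 : Real.exp (-((r - t) * x)) = Real.exp (-(r * x)) * Real.exp (t * x) := by
      rw [← Real.exp_add]; congr 1; ring
    rw [h2, ← h1]
    ring
  · simp

lemma integrable_gammaPDFReal {a r : ℝ} (ha : 0 < a) (hr : 0 < r) :
    Integrable (gammaPDFReal a r) := by
  refine ⟨(measurable_gammaPDFReal a r).aestronglyMeasurable, ?_⟩
  rw [hasFiniteIntegral_iff_ofReal (.of_forall (gammaPDFReal_nonneg ha hr))]
  exact (lintegral_gammaPDF_eq_one ha hr).trans_lt ENNReal.one_lt_top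

lemma integral_gammaPDFReal {a r : ℝ} (ha : 0 < a) (hr : 0 < r) :
    ∫ x, gammaPDFReal a r x = 1 := by
  rw [integral_eq_lintegral_of_nonneg_ae (.of_forall (gammaPDFReal_nonneg ha hr))
    (measurable_gammaPDFReal a r).aestronglyMeasurable]
  exact (congrArg ENNReal.toReal (lintegral_gammaPDF_eq_one ha hr)).trans ENNReal.toReal_one

lemma integrable_exp_mul_gammaMeasure {a r t : ℝ} (ha : 0 < a) (hr : 0 < r) (ht : t < r) :
    Integrable (fun x => Real.exp (t * x)) (gammaMeasure a r) := by
  rw [gammaMeasure, integrable_withDensity_iff_integrable_smul' (f := gammaPDF a r)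
    (measurable_gammaPDFReal a r).ennreal_ofReal (.of_forall fun _ => ENNReal.ofReal_lt_top)]
  simp_rw [gammaPDF, ENNReal.toReal_ofReal (gammaPDFReal_nonneg ha hr _), smul_eq_mul,
    gammaPDFReal_mul_exp hr ht]
  exact (integrable_gammaPDFReal ha (sub_pos.2 ht)).const_mul _

lemma mgf_gammaMeasure {a r t : ℝ} (ha : 0 < a) (hr : 0 < r) (ht : t < r) :
    mgf id (gammaMeasure a r) t = (1 - t / r) ^ (-a) := by
  rw [mgf, gammaMeasure, integral_withDensity_eq_integral_toReal_smul (f := gammaPDF a r)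
    (measurable_gammaPDFReal a r).ennreal_ofReal (.of_forall fun _ => ENNReal.ofReal_lt_top)]
  simp_rw [gammaPDF, ENNReal.toReal_ofReal (gammaPDFReal_nonneg ha hr _), smul_eq_mul, id,
    gammaPDFReal_mul_exp hr ht]
  rw [integral_const_mul, integral_gammaPDFReal ha (sub_pos.2 ht), mul_one]

/-- Both sides are analytic on `Re z < r` and agree on the real points of that half-plane. -/
lemma complexMGF_gammaMeasure {a r : ℝ} (ha : 0 < a) (hr : 0 < r) {z : ℂ} (hz : z.re < r) :
    complexMGF id (gammaMeasure a r) z = (1 - z / r) ^ (-a : ℂ) := by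
  have hsub : Set.Iio r ⊆ interior (integrableExpSet id (gammaMeasure a r)) :=
    interior_maximal (fun t ht => integrable_exp_mul_gammaMeasure ha hr ht) isOpen_Iio
  have hX : AnalyticOnNhd ℂ (complexMGF id (gammaMeasure a r)) {z | z.re < r} :=
    analyticOnNhd_complexMGF.mono fun z hz => hsub hz
  have hY : AnalyticOnNhd ℂ (fun z : ℂ => (1 - z / r) ^ (-a : ℂ)) {z | z.re < r} := by
    intro z hz
    refine AnalyticAt.cpow (by fun_prop) (by fun_prop) (Or.inl ?_)
    have : z.re / r < 1 := (div_lt_one hr).2 hz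
    simpa [Complex.div_ofReal_re] using this
  refine AnalyticOnNhd.eqOn_of_preconnected_of_frequently_eq hX hY
    ((convex_Iio r).linear_preimage Complex.reLm).isPreconnected
    (z₀ := ((0 : ℝ) : ℂ)) (by simpa using hr) ?_ hz
  have h_real : ∃ᶠ (x : ℝ) in nhdsWithin 0 {0}ᶜ,
      complexMGF id (gammaMeasure a r) x = (1 - (x : ℂ) / r) ^ (-a : ℂ) := by
    refine Filter.Eventually.frequently ?_
    filter_upwards [nhdsWithin_le_nhds (Iio_mem_nhds hr)] with x hx
    have : x / r < 1 := (div_lt_one hr).2 hx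
    rw [complexMGF_ofReal, mgf_gammaMeasure ha hr hx, Complex.ofReal_cpow (by linarith)]
    push_cast
    rfl
  refine Filter.Tendsto.frequently ?_ h_real
  refine tendsto_nhdsWithin_iff.2 ⟨?_, ?_⟩
  · exact (Complex.continuous_ofReal.tendsto 0).mono_left nhdsWithin_le_nhds
  · filter_upwards [self_mem_nhdsWithin] with x hx
    simpa using hx

lemma charFun_gammaMeasure {a r : ℝ} (ha : 0 < a) (hr : 0 < r) (t : ℝ) :
    charFun (gammaMeasure a r) t = (1 - t * Complex.I / r) ^ (-a : ℂ) := by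
  rw [← complexMGF_id_mul_I, complexMGF_gammaMeasure ha hr (by simpa using hr)]

/-- Characteristic function of the image of a product measure under summation over the fibers of
`f`: the dual variable is pulled back along `f`. -/
lemma charFun_map_fiberSum {K B : Type*} [Fintype K] [Fintype B] (μ : K → Measure ℝ)
    [∀ k, IsProbabilityMeasure (μ k)] (f : K → B) (t : EuclideanSpace ℝ B) :
    charFun (((Measure.pi μ).map
      (fun g : K → ℝ => fun j : B => ∑ k ∈ Finset.univ.filter (fun k => f k = j), g k)).map
        (WithLp.toLp 2)) t = ∏ k, charFun (μ k) (t (f k)) := by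
  rw [Measure.map_map (by fun_prop) (by fun_prop), charFun_apply,
    integral_map (by fun_prop) (by fun_prop)]
  simp_rw [charFun_apply_real, ← integral_fintype_prod_eq_prod, ← Complex.exp_sum]
  refine integral_congr_ae (.of_forall fun g => ?_)
  simp only [Function.comp_apply, PiLp.inner_apply]
  congr 1
  rw [← Finset.sum_mul]
  congr 1
  rw [← Finset.sum_fiberwise (s := Finset.univ) (g := f)]
  push_cast
  refine Finset.sum_congr rfl fun j _ => ?_
  simp only [RCLike.inner_apply, conj_trivial, Complex.ofReal_mul, Complex.ofReal_sum,
    Finset.mul_sum]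
  refine Finset.sum_congr rfl fun k hk => ?_
  rw [(Finset.mem_filter.1 hk).2]

theorem gamma_aggregation {K B : Type*} [Fintype K] [Nonempty K] [Fintype B]
    (a : K → ℝ) (ha : ∀ k, 0 < a k) (r : ℝ) (hr : 0 < r)
    (f : K → B) (hf : ∀ j : B, ∃ k : K, f k = j) :
    Measure.map (fun g : K → ℝ => fun j : B => ∑ k ∈ Finset.univ.filter (fun k => f k = j), g k)
      (Measure.pi (fun k : K => gammaMeasure (a k) r))
      = Measure.pi (fun j : B =>
          gammaMeasure (∑ k ∈ Finset.univ.filter (fun k => f k = j), a k) r) := by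
  -- Nonempty fibers make the aggregated shapes positive.
  have hpos : ∀ j, 0 < ∑ k ∈ Finset.univ.filter (fun k => f k = j), a k := fun j => by
    obtain ⟨k, hk⟩ := hf j
    exact Finset.sum_pos (fun k _ => ha k) ⟨k, by simpa using hk⟩
  have h1 : ∀ k, IsProbabilityMeasure (gammaMeasure (a k) r) := fun k =>
    isProbabilityMeasure_gammaMeasure (ha k) hr
  have h2 := fun j => isProbabilityMeasure_gammaMeasure (hpos j) hr
  refine charFun_eq_pi_iff.1 fun t => ?_
  rw [charFun_map_fiberSum, ← Finset.prod_fiberwise (s := Finset.univ) (g := f)]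
  refine Finset.prod_congr rfl fun j _ => ?_
  have hne : (1 - t j * Complex.I / r : ℂ) ≠ 0 := fun h => by
    simpa [Complex.div_ofReal_re] using congrArg Complex.re h
  rw [charFun_gammaMeasure (hpos j) hr, Complex.cpow_def_of_ne_zero hne, Complex.ofReal_sum,
    ← Finset.sum_neg_distrib, Finset.mul_sum, Complex.exp_sum]
  refine Finset.prod_congr rfl fun k hk => ?_
  rw [(Finset.mem_filter.1 hk).2, charFun_gammaMeasure (ha k) hr,
    Complex.cpow_def_of_ne_zero hne]
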